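/- Any probability distribution p on {0,1}^n whose support is contained in the union of k pairs of binary vectors each differing in exactly one entry lies in the closure of the set of visible marginal distributions of RBMs with k − 1 hidden units. -/

import Mathlib

/-!
On an edge of the cube every positive function is the restriction of some `exp (w·v + c)`, and by
letting the weights of the other coordinates diverge one makes this function vanish off the edge.
So the weights `exp (w·v + c)` accumulate at every nonnegative function supported on one edge.

One more hidden unit multiplies an unnormalized RBM weight `f` by `1 + h` with `h` of that form.
Since `f > 0`, the function `h` may approach `g / f` for any `g ≥ 0` supported on an edge, so that
`f * (1 + h)` approaches `f + g`: each hidden unit takes care of one edge, and the visible biases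
take care of one more.
-/

open Real

/-- Inner product of a real weight vector with a binary vector regarded as a 0/1 vector. -/
def dotB {n : ℕ} (w : Fin n → ℝ) (v : Fin n → Bool) : ℝ :=
  ∑ i, w i * (if v i then 1 else 0)

/-- The visible marginal of an RBM with `n` visible and `m` hidden units:
`p(v) ∝ exp(B·v) ∏_t (1 + exp(w_t·v + c_t))`. -/
noncomputable def rbmMarginal (n m : ℕ) (B : Fin n → ℝ) (w : Fin m → Fin n → ℝ)
    (c : Fin m → ℝ) : (Fin n → Bool) → ℝ :=
  fun v => (exp (dotB B v) * ∏ t, (1 + exp (dotB (w t) v + c t))) /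
    ∑ v', exp (dotB B v') * ∏ t, (1 + exp (dotB (w t) v' + c t))

open Finset

theorem div_sum_mem_closure_image {α K : Type*} [Fintype α] [DivisionRing K] [TopologicalSpace K]
    [IsTopologicalDivisionRing K] {S : Set (α → K)} {p : α → K}
    (hp : p ∈ closure S) (hsum : ∑ a, p a ≠ 0) :
    (fun a ↦ p a / ∑ a', p a') ∈ closure ((fun f a ↦ f a / ∑ a', f a') '' S) := by
  have hcont : ContinuousAt (fun (f : α → K) a ↦ f a / ∑ a', f a') p :=
    continuousAt_pi.2 fun a ↦ (continuous_apply a).continuousAt.div (by fun_prop) hsum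
  exact mem_closure_image hcont hp

section LogAffine

variable {n : ℕ}

/-- The functions on `{0,1}^n` with affine logarithm: the unnormalized product distributions with
full support, and also the terms `exp (w_t·v + c_t)` that hidden units contribute. -/
def logAffine (n : ℕ) : Set ((Fin n → Bool) → ℝ) :=
  {f | ∃ (w : Fin n → ℝ) (c : ℝ), ∀ v, f v = exp (dotB w v + c)}

theorem pos_of_mem_logAffine {f : (Fin n → Bool) → ℝ} (hf : f ∈ logAffine n)
    (v : Fin n → Bool) : 0 < f v := by
  obtain ⟨w, c, hwc⟩ := hf
  exact hwc v ▸ exp_pos _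

theorem prod_mem_logAffine {G : Fin n → Bool → ℝ} (hG : ∀ i s, 0 < G i s) :
    (fun v ↦ ∏ i, G i (v i)) ∈ logAffine n := by
  refine ⟨fun i ↦ log (G i true) - log (G i false), ∑ i, log (G i false), fun v ↦ ?_⟩
  rw [dotB, ← sum_add_distrib, exp_sum]
  refine prod_congr rfl fun i _ ↦ ?_
  cases v i <;> simp [exp_log (hG i _)]

theorem prod_mem_closure_logAffine {G : Fin n → Bool → ℝ} (hG : ∀ i s, 0 ≤ G i s) :
    (fun v ↦ ∏ i, G i (v i)) ∈ closure (logAffine n) := by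
  have hdense : G ∈ closure (Set.univ.pi fun _ ↦ Set.univ.pi fun _ ↦ Set.Ioi 0) := by
    simpa only [closure_pi_set, closure_Ioi, Set.mem_univ_pi, Set.mem_Ici] using hG
  have hcont : Continuous fun (G : Fin n → Bool → ℝ) (v : Fin n → Bool) ↦ ∏ i, G i (v i) := by
    fun_prop
  exact map_mem_closure hcont hdense fun G' hG' ↦
    prod_mem_logAffine fun i s ↦ hG' i trivial s trivial

theorem eq_prod_of_support_subset_line {ι α R : Type*} [Fintype ι] [DecidableEq ι] [DecidableEq α]
    [CommMonoidWithZero R] {g : (ι → α) → R} {a : ι → α} {i : ι}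
    (hg : ∀ v, g v ≠ 0 → ∀ j ≠ i, v j = a j) (v : ι → α) :
    g v = ∏ j, if j = i then g (Function.update a i (v j)) else if v j = a j then 1 else 0 := by
  by_cases hv : ∀ j ≠ i, v j = a j
  · have hupdate : Function.update a i (v i) = v :=
      Function.update_eq_iff.2 ⟨rfl, fun j hj ↦ (hv j hj).symm⟩
    rw [prod_eq_single i (fun j _ hj ↦ by rw [if_neg hj, if_pos (hv j hj)]) (by simp), if_pos rfl,
      hupdate]
  · rw [not_imp_comm.1 (hg v) hv]
    push Not at hv
    obtain ⟨j, hji, hj⟩ := hv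
    rw [prod_eq_zero (mem_univ j) (by rw [if_neg hji, if_neg hj])]

theorem exists_forall_ne_eq_of_hammingDist_eq_one {ι : Type*} [Fintype ι] {β : ι → Type*}
    [∀ i, DecidableEq (β i)] {a b : ∀ i, β i} (hab : hammingDist a b = 1) :
    ∃ i, ∀ j ≠ i, b j = a j := by
  obtain ⟨i, hi⟩ := card_eq_one.1 hab
  refine ⟨i, fun j hji ↦ ?_⟩
  by_contra hj
  have hmem : j ∈ ({i} : Finset ι) := hi ▸ mem_filter.2 ⟨mem_univ j, Ne.symm hj⟩
  exact hji (mem_singleton.1 hmem)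

theorem mem_closure_logAffine_of_support_subset_edge {a b : Fin n → Bool}
    (hab : hammingDist a b = 1) {g : (Fin n → Bool) → ℝ} (hg : 0 ≤ g)
    (hsupp : Function.support g ⊆ {a, b}) : g ∈ closure (logAffine n) := by
  obtain ⟨i, hi⟩ := exists_forall_ne_eq_of_hammingDist_eq_one hab
  have hline : ∀ v, g v ≠ 0 → ∀ j ≠ i, v j = a j := by
    intro v hv j hj
    rcases hsupp hv with rfl | rfl
    · rfl
    · exact hi j hj
  rw [funext (eq_prod_of_support_subset_line hline)]
  refine prod_mem_closure_logAffine (G := fun j s ↦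
    if j = i then g (Function.update a i s) else if s = a j then 1 else 0) fun j s ↦ ?_
  split_ifs
  exacts [hg _, zero_le_one, le_rfl]

end LogAffine

section RBMWeights

variable {n m : ℕ} {f : (Fin n → Bool) → ℝ}

/-- The unnormalized visible marginals of RBMs with `n` visible and `m` hidden units. The factor
`h₀` stands for `exp (B·v)` up to an arbitrary positive scale, which normalization removes. -/
def rbmWeights (n m : ℕ) : Set ((Fin n → Bool) → ℝ) :=
  {f | ∃ h₀ ∈ logAffine n, ∃ h : Fin m → (Fin n → Bool) → ℝ,
    (∀ t, h t ∈ logAffine n) ∧ f = h₀ * ∏ t, (1 + h t)}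

theorem pos_of_mem_rbmWeights (hf : f ∈ rbmWeights n m) (v : Fin n → Bool) : 0 < f v := by
  obtain ⟨h₀, hh₀, h, hh, rfl⟩ := hf
  rw [Pi.mul_apply, Finset.prod_apply]
  exact mul_pos (pos_of_mem_logAffine hh₀ v)
    (prod_pos fun t _ ↦ add_pos one_pos (pos_of_mem_logAffine (hh t) v))

theorem logAffine_subset_rbmWeights_zero : logAffine n ⊆ rbmWeights n 0 :=
  fun f hf ↦ ⟨f, hf, Fin.elim0, fun t ↦ t.elim0, by simp⟩

theorem mul_one_add_mem_rbmWeights {h : (Fin n → Bool) → ℝ} (hf : f ∈ rbmWeights n m)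
    (hh : h ∈ logAffine n) : f * (1 + h) ∈ rbmWeights n (m + 1) := by
  obtain ⟨h₀, hh₀, h', hh', rfl⟩ := hf
  refine ⟨h₀, hh₀, Fin.snoc h' h, fun t ↦ ?_, ?_⟩
  · cases t using Fin.lastCases with
    | last => simpa only [Fin.snoc_last] using hh
    | cast t => simpa only [Fin.snoc_castSucc] using hh' t
  · simp only [Fin.prod_univ_castSucc, Fin.snoc_castSucc, Fin.snoc_last, mul_assoc]

theorem add_mem_closure_rbmWeights {a b : Fin n → Bool} (hab : hammingDist a b = 1)
    {g : (Fin n → Bool) → ℝ} (hg : 0 ≤ g) (hsupp : Function.support g ⊆ {a, b})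
    (hf : f ∈ closure (rbmWeights n m)) : f + g ∈ closure (rbmWeights n (m + 1)) := by
  suffices hadd : ∀ f ∈ rbmWeights n m, f + g ∈ closure (rbmWeights n (m + 1)) from
    closure_closure.subset (map_mem_closure (f := (· + g)) (continuous_add_const g) hf hadd)
  intro f hf
  have hpos : ∀ v, 0 < f v := pos_of_mem_rbmWeights hf
  have hquot : g / f ∈ closure (logAffine n) :=
    mem_closure_logAffine_of_support_subset_edge hab (fun v ↦ div_nonneg (hg v) (hpos v).le)
      fun v hv ↦ hsupp fun hgv ↦ hv (by rw [Pi.div_apply, hgv, zero_div])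
  have hsum : f * (1 + g / f) = f + g := by
    funext v
    have := (hpos v).ne'
    simp only [Pi.mul_apply, Pi.add_apply, Pi.one_apply, Pi.div_apply]
    field_simp
  rw [← hsum]
  exact map_mem_closure (f := fun h ↦ f * (1 + h)) (by fun_prop) hquot
    fun h hh ↦ mul_one_add_mem_rbmWeights hf hh

theorem mem_closure_rbmWeights_of_edge_cover {E : Finset ((Fin n → Bool) × (Fin n → Bool))}
    (hE : E.Nonempty) (hedges : ∀ e ∈ E, hammingDist e.1 e.2 = 1) {p : (Fin n → Bool) → ℝ}
    (hp : 0 ≤ p) (hcover : ∀ v, p v ≠ 0 → ∃ e ∈ E, v = e.1 ∨ v = e.2) :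
    p ∈ closure (rbmWeights n (#E - 1)) := by
  induction hE using Finset.Nonempty.cons_induction generalizing p with
  | singleton e =>
    refine closure_mono logAffine_subset_rbmWeights_zero
      (mem_closure_logAffine_of_support_subset_edge (hedges e (mem_singleton_self e)) hp ?_)
    intro v hv
    simpa using hcover v hv
  | cons e E he hE ih =>
    set S : Set (Fin n → Bool) := {e.1, e.2}
    have hoff : Sᶜ.indicator p ∈ closure (rbmWeights n (#E - 1)) := by
      refine ih (fun e' he' ↦ hedges e' (mem_cons_of_mem he'))
        (Set.indicator_nonneg fun v _ ↦ hp v) fun v hv ↦ ?_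
      obtain ⟨hvS, hpv⟩ := Set.indicator_apply_ne_zero.1 hv
      obtain ⟨e', he', hve'⟩ := hcover v hpv
      rcases mem_cons.1 he' with rfl | he'
      · exact absurd hve' hvS
      · exact ⟨e', he', hve'⟩
    rw [card_cons, Nat.add_sub_cancel, ← Nat.sub_add_cancel hE.card_pos,
      ← Set.indicator_compl_add_self S p]
    exact add_mem_closure_rbmWeights (hedges e (mem_cons_self e E))
      (Set.indicator_nonneg fun v _ ↦ hp v) Set.support_indicator_subset hoff

theorem exists_div_sum_eq_rbmMarginal (hf : f ∈ rbmWeights n m) :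
    ∃ (B : Fin n → ℝ) (w : Fin m → Fin n → ℝ) (c : Fin m → ℝ),
      (fun v ↦ f v / ∑ v', f v') = rbmMarginal n m B w c := by
  obtain ⟨h₀, ⟨B, b, hB⟩, h, hh, rfl⟩ := hf
  choose w c hwc using hh
  have hscale : ∀ v, (h₀ * ∏ t, (1 + h t)) v =
      exp b * (exp (dotB B v) * ∏ t, (1 + exp (dotB (w t) v + c t))) := fun v ↦ by
    simp only [Pi.mul_apply, Finset.prod_apply, Pi.add_apply, Pi.one_apply, hB, hwc, exp_add _ b]
    ring
  refine ⟨B, w, c, funext fun v ↦ ?_⟩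
  simp only [hscale, ← mul_sum, mul_div_mul_left _ _ (exp_ne_zero b), rbmMarginal]

end RBMWeights

/-- Theorem 1 of the paper: any distribution on `{0,1}^n` whose support is contained in
the union of `k` pairs of binary vectors each differing in exactly one entry lies in the
closure of the visible marginals of RBMs with `k - 1` hidden units. -/
theorem rbm_reduced_universal_approximation (n k : ℕ)
    (p : (Fin n → Bool) → ℝ) (hp : ∀ v, 0 ≤ p v) (hsum : ∑ v, p v = 1)
    (E : Finset ((Fin n → Bool) × (Fin n → Bool)))
    (hEcard : E.card = k)
    (hEedges : ∀ e ∈ E, hammingDist e.1 e.2 = 1)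
    (hEcover : ∀ v, p v ≠ 0 → ∃ e ∈ E, v = e.1 ∨ v = e.2) :
    p ∈ closure {q : (Fin n → Bool) → ℝ |
      ∃ (B : Fin n → ℝ) (w : Fin (k - 1) → Fin n → ℝ) (c : Fin (k - 1) → ℝ),
        q = rbmMarginal n (k - 1) B w c} := by
  subst hEcard
  have hE : E.Nonempty := by
    obtain ⟨v, -, hv⟩ := exists_ne_zero_of_sum_ne_zero (hsum ▸ one_ne_zero)
    obtain ⟨e, he, -⟩ := hEcover v hv
    exact ⟨e, he⟩
  have hweights : p ∈ closure (rbmWeights n (#E - 1)) :=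
    mem_closure_rbmWeights_of_edge_cover hE hEedges hp hEcover
  have hnormalized := div_sum_mem_closure_image hweights (hsum ▸ one_ne_zero)
  simp only [hsum, div_one] at hnormalized
  refine closure_mono ?_ hnormalized
  rintro _ ⟨f, hf, rfl⟩
  exact exists_div_sum_eq_rbmMarginal hf
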